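/- arXiv:1904.00565 — 6 statements merged into one kernel-verified Lean document; each statement's English description precedes it below -/
import Mathlib

section
/- Let α, β ∈ ℂ and let γ ∈ ℂ with γ ∉ ℤ. Then for every z ∈ ℂ with |z| < 1 one has the quadratic relation (1−γ+α)(1−γ+β)·₂F₁(α,β;γ;z)·₂F₁(−α,−β;2−γ;z) − αβ·₂F₁(γ−α−1,γ−β−1;γ;z)·₂F₁(1−γ+α,1−γ+β;2−γ;z) = (1−γ+α+β)(1−γ). -/
/-!
Write `ε = 1 - γ` and `θ = X d/dX`. The functions `F = F(α,β;γ)` and `z^ε K`, with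
`K = F(ε+α,ε+β;1+ε)`, solve the hypergeometric equation with parameters `(α,β,γ)`, while
`G = F(-α,-β;2-γ)` and `z^(-ε) H`, with `H = F(-ε-α,-ε-β;γ)`, solve the one with parameters
`(-α,-β,2-γ)`. The two equations are dual to each other. With `A = (ε+α)(ε+β)` and `B = αβ`, the
four bilinear combinations `A f₁g₁ - B f₂g₂`, where `f` ranges over a solution of the first equation
or its `θ`-derivative, and `g` likewise for the second one, form a closed linear system of
differential equations, in which the factors `z^ε` and `z^(-ε)` cancel. That system has coefficients
in `ℂ⟦X⟧`, so everything happens for formal power series.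

Comparing coefficients in the system (`coeff_eq_zero_of_system`), the derivative `S = θ P` of
`P = A F G - B K H` is found to vanish: its initial terms vanish by a direct computation, and the
recursion `(n² - ε²) Sₙ = 0` determines the rest since `ε` is not an integer. Thus `P` is the
constant `A - B = (1-γ+α+β)(1-γ)`. All series converge absolutely on the unit disc, so Cauchy
products transfer the identity to the functions.
-/

/-- The rising factorial (Pochhammer symbol) `(a)ₙ`. -/
noncomputable def pochN (a : ℂ) (m : ℕ) : ℂ := (ascPochhammer ℂ m).eval a

/-- The Gauss hypergeometric series `₂F₁(a, b; c; z)`. -/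
noncomputable def hyp2F1 (a b c z : ℂ) : ℂ :=
  ∑' n : ℕ, pochN a n * pochN b n / (pochN c n * (n.factorial : ℂ)) * z ^ n

open PowerSeries in
/-- The hypergeometric series as a formal power series. -/
noncomputable def hypSeries (a b c : ℂ) : PowerSeries ℂ :=
  PowerSeries.mk fun n => pochN a n * pochN b n / (pochN c n * (n.factorial : ℂ))

/-- The Euler operator `X d/dX` on formal power series. -/
noncomputable def eulerOp (f : PowerSeries ℂ) : PowerSeries ℂ :=
  PowerSeries.X * PowerSeries.derivative ℂ f

section Euler

open PowerSeries

lemma coeff_eulerOp (f : ℂ⟦X⟧) (n : ℕ) : coeff n (eulerOp f) = n * coeff n f := by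
  cases n with
  | zero => simp [eulerOp]
  | succ n =>
    rw [eulerOp, coeff_succ_X_mul, coeff_derivative]
    push_cast
    ring

lemma eulerOp_add (f g : ℂ⟦X⟧) : eulerOp (f + g) = eulerOp f + eulerOp g := by
  simp [eulerOp, mul_add]

lemma eulerOp_sub (f g : ℂ⟦X⟧) : eulerOp (f - g) = eulerOp f - eulerOp g := by
  simp [eulerOp, mul_sub]

lemma eulerOp_mul (f g : ℂ⟦X⟧) : eulerOp (f * g) = eulerOp f * g + f * eulerOp g := by
  simp only [eulerOp, Derivation.leibniz, smul_eq_mul]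
  ring

lemma eulerOp_C (a : ℂ) : eulerOp (C a) = 0 := by
  simp [eulerOp]

end Euler

lemma pochN_succ (a : ℂ) (n : ℕ) : pochN a (n + 1) = pochN a n * (a + n) :=
  ascPochhammer_succ_eval n a

lemma pochN_ne_zero {c : ℂ} (hc : ∀ n : ℕ, c + n ≠ 0) (n : ℕ) : pochN c n ≠ 0 := by
  induction n with
  | zero => simp [pochN]
  | succ n ih => rw [pochN_succ]; exact mul_ne_zero ih (hc n)

lemma hypSeries_coeff_zero (a b c : ℂ) : PowerSeries.coeff 0 (hypSeries a b c) = 1 := by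
  simp [hypSeries, pochN]

lemma hypSeries_coeff_succ (a b : ℂ) {c : ℂ} (hc : ∀ n : ℕ, c + n ≠ 0) (n : ℕ) :
    PowerSeries.coeff (n + 1) (hypSeries a b c) =
      (a + n) / (1 + n) * ((b + n) / (c + n)) * PowerSeries.coeff n (hypSeries a b c) := by
  have h1 := pochN_ne_zero hc n
  have h2 := hc n
  have h3 : (n.factorial : ℂ) ≠ 0 := Nat.cast_ne_zero.2 n.factorial_ne_zero
  have h4 : (1 + n : ℂ) ≠ 0 := by
    rw [add_comm]; exact Nat.cast_add_one_ne_zero n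
  simp only [hypSeries, PowerSeries.coeff_mk, pochN_succ, Nat.factorial_succ]
  push_cast
  rw [add_comm (n : ℂ) 1]
  field_simp

open PowerSeries in
/-- The hypergeometric differential equation. -/
lemma hypSeries_ode (a b : ℂ) {c : ℂ} (hc : ∀ n : ℕ, c + n ≠ 0) :
    (1 - X) * eulerOp (eulerOp (hypSeries a b c)) =
      X * (C a * C b) * hypSeries a b c
        + (X * (C a + C b) + 1 - C c) * eulerOp (hypSeries a b c) := by
  -- Separate names keep `simp` from splitting `C (a * b)`, `C (a + b)`, `C (1 - c)`.
  obtain ⟨m, hm⟩ : ∃ m, m = a * b := ⟨_, rfl⟩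
  obtain ⟨s, hs⟩ : ∃ s, s = a + b := ⟨_, rfl⟩
  obtain ⟨t, ht⟩ : ∃ t, t = 1 - c := ⟨_, rfl⟩
  have key : (1 - X) * eulerOp (eulerOp (hypSeries a b c)) =
      X * (C m * hypSeries a b c) + X * (C s * eulerOp (hypSeries a b c))
        + C t * eulerOp (hypSeries a b c) := by
    ext n
    rw [sub_mul, one_mul]
    cases n with
    | zero =>
      simp only [map_add, map_sub, coeff_zero_X_mul, coeff_C_mul, coeff_eulerOp]
      simp
    | succ n =>
      simp only [map_add, map_sub, coeff_succ_X_mul, coeff_C_mul, coeff_eulerOp,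
        hypSeries_coeff_succ a b hc n]
      rw [hm, hs, ht]
      have h2 := hc n
      have h4 : (1 + n : ℂ) ≠ 0 := by
        rw [add_comm]; exact Nat.cast_add_one_ne_zero n
      push_cast
      rw [add_comm (n : ℂ) 1]
      field_simp
      ring
  rw [key, hm, hs, ht]
  simp only [map_add, map_mul, map_sub, map_one]
  ring

open Filter Topology in
lemma summable_norm_hypSeries (a b : ℂ) {c : ℂ} (hc : ∀ n : ℕ, c + n ≠ 0) {z : ℂ} (hz : ‖z‖ < 1) :
    Summable fun n => ‖PowerSeries.coeff n (hypSeries a b c) * z ^ n‖ := by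
  have hlim : Tendsto (fun n : ℕ => ‖(a + n) / (1 + n) * ((b + n) / (c + n)) * z‖) atTop
      (𝓝 ‖z‖) := by
    have h1 := tendsto_add_mul_div_add_mul_atTop_nhds a 1 (1 : ℂ) one_ne_zero
    have h2 := tendsto_add_mul_div_add_mul_atTop_nhds b c (1 : ℂ) one_ne_zero
    simpa using ((h1.mul h2).mul_const z).norm
  obtain ⟨r, hzr, hr⟩ := exists_between hz
  refine summable_of_ratio_norm_eventually_le hr ?_
  filter_upwards [hlim.eventually_le_const hzr] with n hn
  rw [norm_norm, norm_norm, hypSeries_coeff_succ a b hc n, pow_succ]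
  calc _ = ‖(a + n) / (1 + n) * ((b + n) / (c + n)) * z‖
        * ‖PowerSeries.coeff n (hypSeries a b c) * z ^ n‖ := by
          rw [← norm_mul]; congr 1; ring
    _ ≤ _ := by gcongr

/-- On the unit disc, products of hypergeometric functions are given by the product of the formal
series. -/
lemma hasSum_hyp2F1_mul (a b a' b' : ℂ) {c c' : ℂ} (hc : ∀ n : ℕ, c + n ≠ 0)
    (hc' : ∀ n : ℕ, c' + n ≠ 0) {z : ℂ} (hz : ‖z‖ < 1) :
    HasSum (fun n => PowerSeries.coeff n (hypSeries a b c * hypSeries a' b' c') * z ^ n)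
      (hyp2F1 a b c z * hyp2F1 a' b' c' z) := by
  have h1 := summable_norm_hypSeries a b hc hz
  have h2 := summable_norm_hypSeries a' b' hc' hz
  have e : ∀ n, PowerSeries.coeff n (hypSeries a b c * hypSeries a' b' c') * z ^ n =
      ∑ kl ∈ Finset.HasAntidiagonal.antidiagonal n,
        PowerSeries.coeff kl.1 (hypSeries a b c) * z ^ kl.1 *
        (PowerSeries.coeff kl.2 (hypSeries a' b' c') * z ^ kl.2) := by
    intro n
    rw [PowerSeries.coeff_mul, Finset.sum_mul]
    refine Finset.sum_congr rfl fun kl hkl => ?_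
    rw [← Finset.HasAntidiagonal.mem_antidiagonal.1 hkl, pow_add]
    ring
  have h3 := tsum_mul_tsum_eq_tsum_sum_antidiagonal_of_summable_norm h1 h2
  have h4 := (summable_norm_sum_mul_antidiagonal_of_summable_norm h1 h2).of_norm.hasSum
  rw [← h3] at h4
  simp only [e]
  simpa [hyp2F1, hypSeries] using h4

open PowerSeries in
/-- Uniqueness for the linear system satisfied by the bilinear combinations. The numbers `ε`, `-ε`
and `0` are the eigenvalues of its residue at the origin; since `ε` is not an integer, the only
obstruction to `S = 0` lies in the initial terms, and hypothesis `h0` removes it. The last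
three conclusions serve the induction. -/
lemma coeff_eq_zero_of_system {ε σ m : ℂ} (hε : ∀ k : ℤ, ε ≠ k) {P Q S D : ℂ⟦X⟧}
    (hP : eulerOp P = S)
    (hQ : (1 - X) * eulerOp Q = X * (C m * S))
    (hS : (1 - X) * eulerOp S = X * (C (2 * m) * P) + X * (C σ * D) + C ε * D
      + (1 - X) * (C 2 * Q))
    (hD : (1 - X) * eulerOp D = X * (C σ * S) + C ε * S)
    (h0 : 2 * m * coeff 0 P + σ * coeff 0 D - 2 * coeff 0 Q = 0) (n : ℕ) :
    coeff n S = 0 ∧ n * coeff n D = 0 ∧ n * coeff n Q = 0 ∧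
      2 * m * coeff n P + σ * coeff n D - 2 * coeff n Q = 0 := by
  induction n with
  | zero => simpa [← hP, coeff_eulerOp, -coeff_zero_eq_constantCoeff] using h0
  | succ n ih =>
    obtain ⟨iS, iD, iQ, iR⟩ := ih
    rw [sub_mul, one_mul] at hQ hS hD
    rw [sub_mul, one_mul] at hS
    have eP := congrArg (coeff (n + 1)) hP
    have eQ := congrArg (coeff (n + 1)) hQ
    have eS := congrArg (coeff (n + 1)) hS
    have eD := congrArg (coeff (n + 1)) hD
    simp only [map_add, map_sub, coeff_succ_X_mul, coeff_C_mul, coeff_eulerOp]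
      at eP eQ eS eD
    push_cast at eP eQ eS eD ⊢
    have hn : (n + 1 : ℂ) ≠ 0 := Nat.cast_add_one_ne_zero n
    have q0 : (n + 1 : ℂ) * coeff (n + 1) Q = 0 := by
      linear_combination eQ + iQ + m * iS
    have q1 := (mul_eq_zero.1 q0).resolve_left hn
    have e1 : (n + 1 : ℂ) * coeff (n + 1) D = ε * coeff (n + 1) S := by
      linear_combination eD + iD + σ * iS
    have e2 : (n + 1 : ℂ) * coeff (n + 1) S = ε * coeff (n + 1) D := by
      linear_combination eS + n * iS + iR + 2 * q1
    have e3 : (n + 1 - ε) * ((n + 1 + ε) * coeff (n + 1) S) = 0 := by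
      linear_combination (n + 1 : ℂ) * e2 + ε * e1
    have k1 : (n + 1 - ε : ℂ) ≠ 0 := fun h => hε (n + 1) (by push_cast; linear_combination -h)
    have k2 : (n + 1 + ε : ℂ) ≠ 0 := fun h => hε (-(n + 1)) (by push_cast; linear_combination h)
    have s1 : coeff (n + 1) S = 0 :=
      (mul_eq_zero.1 ((mul_eq_zero.1 e3).resolve_left k1)).resolve_left k2
    rw [s1, mul_zero] at e1
    have d1 := (mul_eq_zero.1 e1).resolve_left hn
    have p1 : coeff (n + 1) P = 0 := (mul_eq_zero.1 (eP.trans s1)).resolve_left hn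
    simp [s1, d1, p1, q1]

open PowerSeries in
/-- The quadratic relation for formal power series: the left-hand side is constant. -/
lemma coeff_relation {α β γ : ℂ} (hγ : ∀ m : ℤ, γ ≠ (m : ℂ)) {n : ℕ} (hn : n ≠ 0) :
    coeff n (C ((1 - γ + α) * (1 - γ + β)) * (hypSeries α β γ * hypSeries (-α) (-β) (2 - γ))
      - C (α * β) * (hypSeries (γ - α - 1) (γ - β - 1) γ *
          hypSeries (1 - γ + α) (1 - γ + β) (2 - γ))) = 0 := by
  have hc1 : ∀ n : ℕ, γ + n ≠ 0 := fun n h => hγ (-n) (by push_cast; linear_combination h)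
  have hc2 : ∀ n : ℕ, 2 - γ + n ≠ 0 := fun n h => hγ (n + 2) (by push_cast; linear_combination -h)
  have oF := hypSeries_ode α β hc1
  have oG := hypSeries_ode (-α) (-β) hc2
  have oH := hypSeries_ode (γ - α - 1) (γ - β - 1) hc1
  have oK := hypSeries_ode (1 - γ + α) (1 - γ + β) hc2
  have zF := hypSeries_coeff_zero α β γ
  have zG := hypSeries_coeff_zero (-α) (-β) (2 - γ)
  have zH := hypSeries_coeff_zero (γ - α - 1) (γ - β - 1) γ
  have zK := hypSeries_coeff_zero (1 - γ + α) (1 - γ + β) (2 - γ)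
  set F := hypSeries α β γ
  set G := hypSeries (-α) (-β) (2 - γ)
  set H := hypSeries (γ - α - 1) (γ - β - 1) γ
  set K := hypSeries (1 - γ + α) (1 - γ + β) (2 - γ)
  obtain ⟨ε, rfl⟩ : ∃ ε, γ = 1 - ε := ⟨1 - γ, by ring⟩
  have hε : ∀ k : ℤ, ε ≠ k := fun k h => hγ (1 - k) (by push_cast; rw [h])
  -- `K₁` and `H₁` are the `θ`-derivatives of `z^ε K` and `z^(-ε) H`, with the power removed.
  obtain ⟨F₁, hF⟩ : ∃ f, eulerOp F = f := ⟨_, rfl⟩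
  obtain ⟨G₁, hG⟩ : ∃ f, eulerOp G = f := ⟨_, rfl⟩
  obtain ⟨H₁, hH⟩ : ∃ f, eulerOp H = f + C ε * H := ⟨eulerOp H - C ε * H, by ring⟩
  obtain ⟨K₁, hK⟩ : ∃ f, eulerOp K = f - C ε * K := ⟨eulerOp K + C ε * K, by ring⟩
  have zF₁ : coeff 0 F₁ = 0 := by simp [← hF, coeff_eulerOp, -coeff_zero_eq_constantCoeff]
  have zG₁ : coeff 0 G₁ = 0 := by simp [← hG, coeff_eulerOp, -coeff_zero_eq_constantCoeff]
  have zH₁ : coeff 0 H₁ = -ε := by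
    have := congrArg (coeff 0) hH
    simp only [map_add, coeff_C_mul, coeff_eulerOp, zH] at this
    push_cast at this
    linear_combination -this
  have zK₁ : coeff 0 K₁ = ε := by
    have := congrArg (coeff 0) hK
    simp only [map_sub, coeff_C_mul, coeff_eulerOp, zK] at this
    push_cast at this
    linear_combination -this
  simp only [hF, hG, hH, hK, eulerOp_add, eulerOp_sub, eulerOp_mul, eulerOp_C, map_add, map_sub,
    map_one, map_neg, map_ofNat] at oF oG oH oK
  have h := coeff_eq_zero_of_system (ε := ε) (σ := α + β) (m := α * β) hε
    (P := C ((ε + α) * (ε + β)) * (F * G) - C (α * β) * (H * K))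
    (Q := C ((ε + α) * (ε + β)) * (F₁ * G₁) - C (α * β) * (H₁ * K₁))
    (S := C ((ε + α) * (ε + β)) * (F₁ * G + F * G₁) - C (α * β) * (H * K₁ + H₁ * K))
    (D := C ((ε + α) * (ε + β)) * (F₁ * G - F * G₁) - C (α * β) * (H * K₁ - H₁ * K))
    ?_ ?_ ?_ ?_ ?_ n
  · have h1 : coeff n (eulerOp (C ((ε + α) * (ε + β)) * (F * G) - C (α * β) * (H * K))) = 0 := by
      rw [← h.1]
      congr 1
      simp only [hF, hG, hH, hK, eulerOp_sub, eulerOp_mul, eulerOp_C]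
      ring
    rw [coeff_eulerOp] at h1
    have h2 := (mul_eq_zero.1 h1).resolve_left (Nat.cast_ne_zero.2 hn)
    rw [← h2]
    congr 5 <;> ring
  · simp only [hF, hG, hH, hK, eulerOp_sub, eulerOp_mul, eulerOp_C]
    ring
  all_goals
    try simp only [hF, hG, hH, hK, eulerOp_add, eulerOp_sub, eulerOp_mul, eulerOp_C, map_add,
      map_mul, map_ofNat]
  · linear_combination (C ε + C α) * (C ε + C β) * (G₁ * oF + F₁ * oG)
      - C α * C β * (K₁ * oH + H₁ * oK)
  · linear_combination (C ε + C α) * (C ε + C β) * (G * oF + F * oG)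
      - C α * C β * (K * oH + H * oK)
  · linear_combination (C ε + C α) * (C ε + C β) * (G * oF - F * oG)
      - C α * C β * (- K * oH + H * oK)
  · rw [coeff_zero_eq_constantCoeff_apply] at zF zG zH zK zF₁ zG₁ zH₁ zK₁
    simp only [coeff_zero_eq_constantCoeff_apply, map_sub, map_add, map_mul, constantCoeff_C,
      zF, zG, zH, zK, zF₁, zG₁, zH₁, zK₁]
    ring

/-- Quadratic relation for Gauss' hypergeometric function. -/
theorem gauss_quadratic_relation (α β γ : ℂ) (hγ : ∀ m : ℤ, γ ≠ (m : ℂ))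
    (z : ℂ) (hz : ‖z‖ < 1) :
    (1 - γ + α) * (1 - γ + β) * hyp2F1 α β γ z * hyp2F1 (-α) (-β) (2 - γ) z
      - α * β * hyp2F1 (γ - α - 1) (γ - β - 1) γ z *
        hyp2F1 (1 - γ + α) (1 - γ + β) (2 - γ) z
      = (1 - γ + α + β) * (1 - γ) := by
  have hc1 : ∀ n : ℕ, γ + n ≠ 0 := fun n h => hγ (-n) (by push_cast; linear_combination h)
  have hc2 : ∀ n : ℕ, 2 - γ + n ≠ 0 := fun n h => hγ (n + 2) (by push_cast; linear_combination -h)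
  have h1 := (hasSum_hyp2F1_mul α β (-α) (-β) hc1 hc2 hz).mul_left ((1 - γ + α) * (1 - γ + β))
  have h2 := (hasSum_hyp2F1_mul (γ - α - 1) (γ - β - 1) (1 - γ + α) (1 - γ + β) hc1 hc2 hz).mul_left
    (α * β)
  have h3 := hasSum_single (α := ℂ) (L := .unconditional ℕ) (f := fun n => (1 - γ + α) * (1 - γ + β) *
      (PowerSeries.coeff n (hypSeries α β γ * hypSeries (-α) (-β) (2 - γ)) * z ^ n)
      - α * β * (PowerSeries.coeff n (hypSeries (γ - α - 1) (γ - β - 1) γ *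
          hypSeries (1 - γ + α) (1 - γ + β) (2 - γ)) * z ^ n)) 0 ?_
  · have h4 := (h1.sub h2).unique h3
    have h5 := hypSeries_coeff_zero
    simp only [PowerSeries.coeff_zero_eq_constantCoeff_apply] at h5
    simp only [PowerSeries.coeff_zero_eq_constantCoeff_apply, map_mul, h5] at h4
    linear_combination h4
  · intro n hn
    have h5 := coeff_relation hγ hn (α := α) (β := β)
    simp only [map_sub, PowerSeries.coeff_C_mul] at h5
    linear_combination z ^ n * h5
end

section
/- Let α ∈ ℂ and let γ ∈ ℂ with γ ∉ ℤ. Then for every z ∈ ℂ one has the quadratic relation (γ−α−1)·₁F₁(α;γ;z)·₁F₁(−α;2−γ;−z) + α·₁F₁(1+α−γ;2−γ;z)·₁F₁(γ−α−1;γ;−z) = γ−1. -/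
/-- Kummer's confluent hypergeometric series `₁F₁(a; c; z)`. -/
noncomputable def hyp1F1 (a c z : ℂ) : ℂ :=
  ∑' n : ℕ, pochN a n / (pochN c n * (n.factorial : ℂ)) * z ^ n

@[simp] lemma pochN_zero (a : ℂ) : pochN a 0 = 1 := by simp [pochN]

lemma pochN_succ_left (a : ℂ) (n : ℕ) : pochN a (n + 1) = a * pochN (a + 1) n := by
  simp [pochN, ascPochhammer_succ_left, Polynomial.eval_comp]

lemma add_one_add_natCast_ne_zero {c : ℂ} (hc : ∀ n : ℕ, c + n ≠ 0) (n : ℕ) :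
    c + 1 + n ≠ 0 := by
  have := hc (n + 1)
  push_cast at this
  rwa [add_assoc, add_comm 1 (n : ℂ)]

/-- Chu–Vandermonde summation, `₂F₁(−n, a; c; 1) = (c−a)ₙ / (c)ₙ`. -/
lemma sum_choose_pochN (a : ℂ) (n : ℕ) : ∀ {c : ℂ}, (∀ m : ℕ, c + m ≠ 0) →
    ∑ k ∈ Finset.range (n + 1), (n.choose k : ℂ) * ((-1) ^ k * (pochN a k / pochN c k))
      = pochN (c - a) n / pochN c n := by
  induction n with
  | zero => intro c hc; simp
  | succ n ih =>
    intro c hc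
    -- Pascal's rule turns the sum into one of consecutive differences, and
    -- `(a)ₖ/(c)ₖ − (a)ₖ₊₁/(c)ₖ₊₁ = ((c−a)/c) (a)ₖ/(c+1)ₖ` reduces it to the case `(n, c + 1)`.
    have hc' := add_one_add_natCast_ne_zero hc
    have h0 : c ≠ 0 := by simpa using hc 0
    have hdiff : ∀ k : ℕ, pochN a k / pochN c k - pochN a (k + 1) / pochN c (k + 1)
        = (c - a) / c * (pochN a k / pochN (c + 1) k) := by
      intro k
      have h1 := pochN_succ c k
      rw [pochN_succ_left] at h1
      have h2 := pochN_ne_zero hc k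
      have h3 := pochN_ne_zero hc' k
      have h4 : pochN (c + 1) k = pochN c k * (c + k) / c := by
        rw [← h1]; field_simp
      have h5 := hc k
      rw [pochN_succ a, pochN_succ c, h4]
      field_simp
      ring
    rw [Finset.sum_range_succ_comm, Finset.sum_range_succ', add_comm]
    have hP : ∀ k ∈ Finset.range n, ((n + 1).choose (k + 1) : ℂ)
          * ((-1) ^ (k + 1) * (pochN a (k + 1) / pochN c (k + 1)))
        = (n.choose (k + 1) : ℂ) * ((-1) ^ (k + 1) * (pochN a (k + 1) / pochN c (k + 1)))
          + (n.choose k : ℂ) * ((-1) ^ (k + 1) * (pochN a (k + 1) / pochN c (k + 1))) := by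
      intro k _
      rw [Nat.choose_succ_succ]; push_cast; ring
    have key : ∑ k ∈ Finset.range (n + 1), (n.choose k : ℂ) * ((-1) ^ k *
          (pochN a k / pochN c k - pochN a (k + 1) / pochN c (k + 1)))
        = (c - a) / c * (pochN (c + 1 - a) n / pochN (c + 1) n) := by
      rw [← ih hc', Finset.mul_sum]
      refine Finset.sum_congr rfl fun k _ => ?_
      rw [hdiff]; ring
    have hR : pochN (c - a) (n + 1) / pochN c (n + 1)
        = (c - a) / c * (pochN (c + 1 - a) n / pochN (c + 1) n) := by
      rw [pochN_succ_left, pochN_succ_left, show c - a + 1 = c + 1 - a by ring, mul_div_mul_comm]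
    rw [hR, ← key, Finset.sum_congr rfl hP, Finset.sum_add_distrib]
    have e1 : ∀ k : ℕ, (n.choose k : ℂ) * ((-1) ^ k *
          (pochN a k / pochN c k - pochN a (k + 1) / pochN c (k + 1)))
        = (n.choose k : ℂ) * ((-1) ^ k * (pochN a k / pochN c k))
          + (n.choose k : ℂ) * ((-1) ^ (k + 1) * (pochN a (k + 1) / pochN c (k + 1))) := by
      intro k; ring
    rw [Finset.sum_congr rfl fun k _ => e1 k, Finset.sum_add_distrib,
      Finset.sum_range_succ' (fun k => (n.choose k : ℂ) * ((-1) ^ k * (pochN a k / pochN c k))),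
      Finset.sum_range_succ (fun k => (n.choose k : ℂ) *
        ((-1) ^ (k + 1) * (pochN a (k + 1) / pochN c (k + 1))))]
    simp only [Nat.choose_self, Nat.choose_zero_right]
    ring

lemma summable_norm_hyp1F1 (a : ℂ) {c : ℂ} (hc : ∀ n : ℕ, c + n ≠ 0) (z : ℂ) :
    Summable fun n : ℕ => ‖pochN a n / (pochN c n * (n.factorial : ℂ)) * z ^ n‖ := by
  have h1 : Filter.Tendsto (fun n : ℕ => (a + 1 * (n : ℂ)) / (c + 1 * n)) Filter.atTop
      (nhds (1 / 1)) := tendsto_add_mul_div_add_mul_atTop_nhds a c 1 one_ne_zero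
  have h2 : Filter.Tendsto (fun n : ℕ => 1 / ((n : ℂ) + 1)) Filter.atTop (nhds 0) :=
    tendsto_one_div_add_atTop_nhds_zero_nat
  have h3 := ((h1.mul h2).mul_const z).norm
  simp only [mul_zero, zero_mul, norm_zero] at h3
  refine summable_of_ratio_norm_eventually_le (r := 1 / 2) (by norm_num) ?_
  filter_upwards [h3.eventually_le_const (show (0 : ℝ) < 1 / 2 by norm_num)] with n hn
  have h4 := pochN_ne_zero hc n
  have h5 := hc n
  have h6 : (n : ℂ) + 1 ≠ 0 := Nat.cast_add_one_ne_zero n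
  have h7 : (n.factorial : ℂ) ≠ 0 := by exact_mod_cast n.factorial_ne_zero
  have : pochN a (n + 1) / (pochN c (n + 1) * ((n + 1).factorial : ℂ)) * z ^ (n + 1)
      = ((a + 1 * (n : ℂ)) / (c + 1 * n) * (1 / ((n : ℂ) + 1)) * z)
        * (pochN a n / (pochN c n * (n.factorial : ℂ)) * z ^ n) := by
    rw [pochN_succ, pochN_succ, Nat.factorial_succ, one_mul]
    push_cast
    field_simp
    ring
  rw [norm_norm, norm_norm, this, norm_mul]
  gcongr

lemma hyp1F1_zero (a c : ℂ) : hyp1F1 a c 0 = 1 := by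
  rw [hyp1F1, tsum_eq_single 0]
  · simp
  · intro n hn; simp [hn]

/-- On a disc, the terms of the series are dominated by those at its radius. -/
lemma norm_hyp1F1_term_le (a c : ℂ) {r : ℝ} {w : ℂ} (hw : w ∈ Metric.ball (0 : ℂ) r) (n : ℕ) :
    ‖pochN a n / (pochN c n * (n.factorial : ℂ)) * w ^ n‖
      ≤ ‖pochN a n / (pochN c n * (n.factorial : ℂ)) * (r : ℂ) ^ n‖ := by
  have hw' : ‖w‖ < r := by simpa using hw
  rw [norm_mul, norm_mul, norm_pow, norm_pow, Complex.norm_real]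
  gcongr
  exact hw'.le.trans (le_abs_self r)

lemma differentiable_hyp1F1 (a : ℂ) {c : ℂ} (hc : ∀ n : ℕ, c + n ≠ 0) :
    Differentiable ℂ (hyp1F1 a c) := by
  intro z
  have hz : z ∈ Metric.ball (0 : ℂ) (‖z‖ + 1) := by simp
  have := Complex.differentiableOn_tsum_of_summable_norm
    (summable_norm_hyp1F1 a hc ((‖z‖ + 1 : ℝ) : ℂ))
    (fun n => (by fun_prop : DifferentiableOn ℂ
      (fun w : ℂ => pochN a n / (pochN c n * (n.factorial : ℂ)) * w ^ n) _))
    Metric.isOpen_ball (fun n w hw => norm_hyp1F1_term_le a c hw n)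
  exact (this z hz).differentiableAt (Metric.isOpen_ball.mem_nhds hz)

/-- The contiguity relation `z F'(a) = a (F(a+1) − F(a))`. -/
lemma mul_deriv_hyp1F1 (a : ℂ) {c : ℂ} (hc : ∀ n : ℕ, c + n ≠ 0) (z : ℂ) :
    z * deriv (hyp1F1 a c) z = a * (hyp1F1 (a + 1) c z - hyp1F1 a c z) := by
  have hz : z ∈ Metric.ball (0 : ℂ) (‖z‖ + 1) := by simp
  have h1 : HasSum _ (deriv (hyp1F1 a c) z) := Complex.hasSum_deriv_of_summable_norm
    (summable_norm_hyp1F1 a hc ((‖z‖ + 1 : ℝ) : ℂ))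
    (fun n => (by fun_prop : DifferentiableOn ℂ
      (fun w : ℂ => pochN a n / (pochN c n * (n.factorial : ℂ)) * w ^ n) _))
    Metric.isOpen_ball (fun n w hw => norm_hyp1F1_term_le a c hw n) hz
  have h2 := ((summable_norm_hyp1F1 (a + 1) hc z).of_norm.hasSum.sub
    (summable_norm_hyp1F1 a hc z).of_norm.hasSum).mul_left a
  refine (h1.mul_left z).unique ?_
  rw [hyp1F1, hyp1F1]
  convert h2 using 2 with n
  have hp : pochN a n * (a + n) = a * pochN (a + 1) n := by
    rw [← pochN_succ, pochN_succ_left]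
  have hd : deriv (fun w : ℂ => pochN a n / (pochN c n * (n.factorial : ℂ)) * w ^ n) z
      = pochN a n / (pochN c n * (n.factorial : ℂ)) * (n * z ^ (n - 1)) := by
    simp
  have hz' : z * ((n : ℂ) * z ^ (n - 1)) = n * z ^ n := by
    cases n with
    | zero => simp
    | succ m => rw [Nat.add_sub_cancel, pow_succ]; ring
  rw [hd, mul_left_comm, hz']
  linear_combination (z ^ n / (pochN c n * (n.factorial : ℂ))) * hp

/-- Kummer's transformation. -/
lemma hyp1F1_kummer (a : ℂ) {c : ℂ} (hc : ∀ n : ℕ, c + n ≠ 0) (z : ℂ) :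
    hyp1F1 (c - a) c (-z) = Complex.exp (-z) * hyp1F1 a c z := by
  have hexp : Complex.exp (-z) = ∑' n : ℕ, (-z) ^ n / (n.factorial : ℂ) := by
    rw [Complex.exp_eq_exp_ℂ, NormedSpace.exp_eq_tsum_div]
  rw [mul_comm, hexp, hyp1F1, hyp1F1,
    tsum_mul_tsum_eq_tsum_sum_antidiagonal_of_summable_norm (summable_norm_hyp1F1 a hc z)
      (NormedSpace.norm_expSeries_div_summable (-z))]
  refine tsum_congr fun n => ?_
  rw [Finset.Nat.sum_antidiagonal_eq_sum_range_succ_mk, div_mul_eq_div_div,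
    ← sum_choose_pochN a n hc, Finset.sum_div, Finset.sum_mul]
  refine Finset.sum_congr rfl fun k hk => ?_
  have hk : k ≤ n := by simpa [Nat.lt_succ_iff] using hk
  have h1 : (n.factorial : ℂ) ≠ 0 := by exact_mod_cast n.factorial_ne_zero
  have h2 : (k.factorial : ℂ) ≠ 0 := by exact_mod_cast k.factorial_ne_zero
  have h3 : ((n - k).factorial : ℂ) ≠ 0 := by exact_mod_cast (n - k).factorial_ne_zero
  have h4 := pochN_ne_zero hc k
  have h5 : (-z) ^ n = (-1) ^ k * z ^ k * (-z) ^ (n - k) := by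
    rw [← mul_pow, neg_one_mul, ← pow_add, Nat.add_sub_cancel' hk]
  have h6 : ((-1 : ℂ) ^ k) * (-1) ^ k = 1 := by rw [← mul_pow]; simp
  rw [Nat.cast_choose ℂ hk, h5]
  field_simp
  linear_combination (pochN a k * z ^ k * (-z) ^ (n - k)) * h6

/-- Quadratic relation for Kummer's confluent hypergeometric function. -/
theorem kummer_quadratic_relation (α γ : ℂ) (hγ : ∀ m : ℤ, γ ≠ (m : ℂ)) (z : ℂ) :
    (γ - α - 1) * hyp1F1 α γ z * hyp1F1 (-α) (2 - γ) (-z)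
      + α * hyp1F1 (1 + α - γ) (2 - γ) z * hyp1F1 (γ - α - 1) γ (-z)
      = γ - 1 := by
  have hc : ∀ n : ℕ, γ + n ≠ 0 := by
    intro n h
    apply hγ (-n)
    push_cast
    linear_combination h
  have hc' : ∀ n : ℕ, 2 - γ + n ≠ 0 := by
    intro n h
    apply hγ (2 + n)
    push_cast
    linear_combination -h
  set E : ℂ → ℂ := fun z => (γ - α - 1) * hyp1F1 α γ z * hyp1F1 (-α) (2 - γ) (-z)
      + α * hyp1F1 (1 + α - γ) (2 - γ) z * hyp1F1 (γ - α - 1) γ (-z) with hE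
  have hA := differentiable_hyp1F1 α hc
  have hB := differentiable_hyp1F1 (-α) hc'
  have hC := differentiable_hyp1F1 (1 + α - γ) hc'
  have hD := differentiable_hyp1F1 (γ - α - 1) hc
  have hEd : Differentiable ℂ E := by fun_prop
  have hderiv : ∀ w, w * deriv E w = 0 := by
    intro w
    have dB : HasDerivAt (fun w => hyp1F1 (-α) (2 - γ) (-w)) _ w :=
      (hB (-w)).hasDerivAt.comp w (hasDerivAt_neg w)
    have dD : HasDerivAt (fun w => hyp1F1 (γ - α - 1) γ (-w)) _ w :=
      (hD (-w)).hasDerivAt.comp w (hasDerivAt_neg w)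
    have dE := (((hA w).hasDerivAt.const_mul (γ - α - 1)).mul dB).add
      (((hC w).hasDerivAt.const_mul α).mul dD)
    rw [show deriv E w = _ from dE.deriv]
    have tA := mul_deriv_hyp1F1 α hc w
    have tB := mul_deriv_hyp1F1 (-α) hc' (-w)
    have tC := mul_deriv_hyp1F1 (1 + α - γ) hc' w
    have tD := mul_deriv_hyp1F1 (γ - α - 1) hc (-w)
    have kA := hyp1F1_kummer α hc w
    have kC := hyp1F1_kummer (1 + α - γ) hc' w
    have kD := hyp1F1_kummer (α + 1) hc w
    have kB := hyp1F1_kummer (1 + α - γ + 1) hc' w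
    rw [show γ - (α + 1) = γ - α - 1 by ring] at kD
    rw [show 2 - γ - (1 + α - γ + 1) = -α by ring] at kB
    rw [show 2 - γ - (1 + α - γ) = -α + 1 by ring] at kC
    rw [show γ - α = γ - α - 1 + 1 by ring] at kA
    rw [kA] at tD
    rw [kC] at tB
    have he : Complex.exp w * Complex.exp (-w) = 1 := by rw [← Complex.exp_add]; simp
    have kD' : hyp1F1 (α + 1) γ w = Complex.exp w * hyp1F1 (γ - α - 1) γ (-w) := by
      rw [kD, ← mul_assoc, he, one_mul]
    have kB' : hyp1F1 (1 + α - γ + 1) (2 - γ) w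
        = Complex.exp w * hyp1F1 (-α) (2 - γ) (-w) := by
      rw [kB, ← mul_assoc, he, one_mul]
    rw [kD'] at tA
    rw [kB'] at tC
    linear_combination (γ - α - 1) * hyp1F1 (-α) (2 - γ) (-w) * tA
      + (γ - α - 1) * hyp1F1 α γ w * tB
      + α * hyp1F1 (γ - α - 1) γ (-w) * tC + α * hyp1F1 (1 + α - γ) (2 - γ) w * tD
  -- `z E' = 0` gives `E' = 0` away from the origin, and at the origin by continuity of `E'`.
  have hzero : deriv E = fun _ => 0 := by
    refine Continuous.ext_on (dense_compl_singleton (0 : ℂ))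
      (hEd.contDiff.continuous_deriv (n := 1) le_rfl) continuous_const fun w hw => ?_
    exact (mul_eq_zero.mp (hderiv w)).resolve_left hw
  have hconst : E z = E 0 := is_const_of_deriv_eq_zero hEd (fun w => congrFun hzero w) z 0
  change E z = γ - 1
  rw [hconst, hE]
  simp only [neg_zero, hyp1F1_zero]
  ring
end

section
/- Let γ ∈ ℂ with γ ∉ ℤ and let h ∈ ℂ with h ≠ 0. Let ∇ be the ℂ-linear endomorphism of the space ℂ[y,y⁻¹] of complex Laurent polynomials determined on coefficients as follows: for f = Σ_{n∈ℤ} aₙ yⁿ (with only finitely many aₙ nonzero), ∇f = Σ_{n∈ℤ} ((n+γ)aₙ + h·a_{n−1}) · y^{n−1}. Then ∇ is injective, and ℂ[y,y⁻¹] is the internal direct sum of the image of ∇ and the one-dimensional subspace ℂ·1 spanned by the constant Laurent polynomial 1; in other words, every Laurent polynomial g can be written uniquely as g = ∇f + c·1 with f ∈ ℂ[y,y⁻¹] and c ∈ ℂ. -/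
/-!
Reading off the coefficient at `y^m`, the hypothesis says
`(∇f)ₘ = (m + 1 + γ) aₘ₊₁ + h aₘ`; in particular `∇` is linear and
`∇ yⁿ = (n + γ) yⁿ⁻¹ + h yⁿ`.

*Existence.* Since `h ≠ 0` and `n + γ ≠ 0`, the monomials `yⁿ` and `yⁿ⁻¹` are nonzero multiples of
each other modulo the image of `∇`. Hence every monomial, and so every Laurent polynomial, lies in
`im ∇ + ℂ·1`.

*Uniqueness.* Suppose `∇f = c·1` with `f ≠ 0`. If `f` has top degree `N` and bottom degree `M`, then
`∇f` has top degree `N` (leading coefficient multiplied by `h`) and bottom degree `M - 1` (lowest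
coefficient multiplied by `M + γ`). Both must be `0`, so `N = 0 < 1 = M`, which is absurd.
Injectivity of `∇` is the uniqueness statement with constant part `0`.
-/

/-- If `∇f` is a constant Laurent polynomial `c`, then `f = 0`: the top and bottom degrees of `f` would
have to be `0` and `1`. Covers both the kernel of `∇` and its image meeting the constants. -/
theorem eq_zero_of_nabla_eq_const {γ h : ℂ} (hγ : ∀ m : ℤ, γ ≠ (m : ℂ)) (hh : h ≠ 0)
    {f : ℤ →₀ ℂ} {c : ℂ}
    (hf : ∀ m : ℤ, ((m : ℂ) + 1 + γ) * f (m + 1) + h * f m = Finsupp.single (0 : ℤ) c m) :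
    f = 0 := by
  by_contra hne
  have hs : f.support.Nonempty := Finsupp.support_nonempty_iff.mpr hne
  obtain ⟨N, hN, hmax⟩ := f.support.exists_max_image id hs
  obtain ⟨M, hM, hmin⟩ := f.support.exists_min_image id hs
  simp only [Finsupp.mem_support_iff, id] at hN hM hmax hmin
  have hN0 : N = 0 := by
    by_contra h0
    have h1 : f (N + 1) = 0 := by
      by_contra h2
      have := hmax _ h2
      omega
    have h3 := hf N
    rw [h1, Finsupp.single_eq_of_ne h0] at h3
    simp [hh, hN] at h3
  have hM1 : M = 1 := by
    by_contra h0
    have h1 : f (M - 1) = 0 := by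
      by_contra h2
      have := hmin _ h2
      omega
    have h3 := hf (M - 1)
    rw [h1, Finsupp.single_eq_of_ne (by omega), sub_add_cancel] at h3
    simp only [Int.cast_sub, Int.cast_one, sub_add_cancel, mul_zero, add_zero, mul_eq_zero, hM,
      or_false] at h3
    apply hγ (-M)
    push_cast
    linear_combination h3
  have := hmax M hM
  omega


/-- The twisted connection `∇ = d + γ dy/y + h dy` on the Laurent polynomial ring
(Lemma 2.2 of the paper, case `h ≠ 0`): any operator on `ℂ[y,y⁻¹]`
(modelled as finitely supported functions `ℤ →₀ ℂ`) sending
`Σ aₙ yⁿ` to `Σ ((n+γ)aₙ + h a_{n-1}) y^{n-1}` is injective and its image is a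
complement of the line spanned by the constant Laurent polynomial `1`:
every `g` is uniquely `∇ f + c • 1`. Here `γ ∉ ℤ` and `h ≠ 0`. -/
theorem nabla_inj_and_image_compl_of_gamma_not_int (γ : ℂ) (hγ : ∀ m : ℤ, γ ≠ (m : ℂ))
    (h : ℂ) (hh : h ≠ 0)
    (nabla : (ℤ →₀ ℂ) → (ℤ →₀ ℂ))
    (hnabla : ∀ (f : ℤ →₀ ℂ) (n : ℤ),
      nabla f (n - 1) = ((n : ℂ) + γ) * f n + h * f (n - 1)) :
    Function.Injective nabla ∧
      ∀ g : ℤ →₀ ℂ, ∃! p : (ℤ →₀ ℂ) × ℂ,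
        g = nabla p.1 + p.2 • Finsupp.single (0 : ℤ) (1 : ℂ) := by
  have hc : ∀ (f : ℤ →₀ ℂ) (m : ℤ),
      nabla f m = ((m : ℂ) + 1 + γ) * f (m + 1) + h * f m := by
    intro f m
    simpa using hnabla f (m + 1)
  let L : (ℤ →₀ ℂ) →ₗ[ℂ] (ℤ →₀ ℂ) :=
    { toFun := nabla
      map_add' := fun f g => by
        ext m
        simp only [hc, Finsupp.add_apply]
        ring
      map_smul' := fun a f => by
        ext m
        simp only [hc, Finsupp.smul_apply, smul_eq_mul, RingHom.id_apply]
        ring }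
  let S : Submodule ℂ (ℤ →₀ ℂ) := LinearMap.range L ⊔ Submodule.span ℂ {Finsupp.single 0 1}
  -- `∇ yⁿ = (n + γ) yⁿ⁻¹ + h yⁿ`
  have hmono : ∀ n : ℤ, ((n : ℂ) + γ) • Finsupp.single (n - 1) (1 : ℂ) +
      h • Finsupp.single n (1 : ℂ) ∈ S := by
    intro n
    refine Submodule.mem_sup_left ⟨Finsupp.single n 1, ?_⟩
    ext m
    change nabla _ m = _
    have e1 : n - 1 = m ↔ n = m + 1 := by omega
    simp only [hc, Finsupp.add_apply, Finsupp.smul_apply, smul_eq_mul, Finsupp.single_apply, e1]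
    congr 1
    split_ifs with h1
    · subst h1
      push_cast
      ring
    · simp
  have hne : ∀ n : ℤ, (n : ℂ) + γ ≠ 0 := by
    intro n h0
    apply hγ (-n)
    push_cast
    linear_combination h0
  have hS : ∀ n : ℤ, Finsupp.single n (1 : ℂ) ∈ S := by
    intro n
    induction n using Int.induction_on with
    | zero => exact Submodule.mem_sup_right (Submodule.mem_span_singleton_self _)
    | succ k ih =>
      have h1 := hmono (k + 1)
      rw [add_sub_cancel_right, S.add_mem_iff_right (S.smul_mem _ ih)] at h1
      exact (S.smul_mem_iff hh).mp h1
    | pred k ih =>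
      have h1 := hmono (-k)
      rw [S.add_mem_iff_left (S.smul_mem _ ih)] at h1
      exact (S.smul_mem_iff (hne _)).mp h1
  have htop : ∀ g, g ∈ S := by
    intro g
    induction g using Finsupp.induction_linear with
    | zero => exact S.zero_mem
    | add f g hf hg => exact S.add_mem hf hg
    | single n a => simpa using S.smul_mem a (hS n)
  have huniq : ∀ (f f' : ℤ →₀ ℂ) (c c' : ℂ),
      nabla f + c • Finsupp.single (0 : ℤ) (1 : ℂ) =
        nabla f' + c' • Finsupp.single (0 : ℤ) (1 : ℂ) → f = f' ∧ c = c' := by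
    intro f f' c c' he
    have hff : f = f' := by
      refine sub_eq_zero.mp (eq_zero_of_nabla_eq_const (c := c' - c) hγ hh fun m => ?_)
      have h1 := DFunLike.congr_fun he m
      simp only [Finsupp.add_apply, Finsupp.smul_apply, smul_eq_mul, hc] at h1
      have h2 : Finsupp.single (0 : ℤ) (c' - c) m
          = (c' - c) * Finsupp.single (0 : ℤ) (1 : ℂ) m := by
        by_cases h0 : (0 : ℤ) = m <;> simp [h0]
      rw [h2, Finsupp.sub_apply, Finsupp.sub_apply]
      linear_combination h1
    subst hff
    refine ⟨rfl, ?_⟩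
    simpa using DFunLike.congr_fun (add_left_cancel he) 0
  refine ⟨fun f f' he => (huniq f f' 0 0 (by rw [he])).1, fun g => ?_⟩
  obtain ⟨_, ⟨f, rfl⟩, v, hv, hg⟩ := Submodule.mem_sup.mp (htop g)
  obtain ⟨c, rfl⟩ := Submodule.mem_span_singleton.mp hv
  refine ⟨(f, c), hg.symm, fun p hp => ?_⟩
  have := huniq p.1 f p.2 c (hp.symm.trans hg.symm)
  exact Prod.ext this.1 this.2
end

section
/- Let k, n, N be positive integers, let {1,…,N} = I₀ ∪ I₁ ∪ ⋯ ∪ I_k be a partition into pairwise disjoint subsets, and let A be an (n+k) × N integer matrix such that for each m ∈ {1,…,k} and each j ∈ {1,…,N}, the (m,j)-entry of A equals 1 if j ∈ I_m and 0 otherwise. Let σ ⊆ {1,…,N} with |σ| = n+k be such that A_σ is invertible over ℚ, and let j ∈ {1,…,N} ∖ σ be such that the sum of all entries of A_σ⁻¹·a(j) is at most 1. Then: (i) if j ∈ I_l for some l ∈ {1,…,k}, the sum over i ∈ σ ∩ I₀ of the i-th entry of A_σ⁻¹·a(j) is at most 0; (ii) if j ∈ I₀, the sum over i ∈ σ ∩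 I₀ of the i-th entry of A_σ⁻¹·a(j) is at most 1. (All inequalities are inequalities of rational numbers.) -/
/-!
Write `x = A_σ⁻¹ a(j)`, so that `A_σ x = a(j)`. The row of index `m ≥ 1` of this system says that
the entries of `x` over `σ ∩ I_m` sum to `1` if `j ∈ I_m` and to `0` otherwise. Since the `I_m`
partition the columns, adding up these rows gives
`∑ x = ∑_{σ ∩ I₀} x + (1 - [j ∈ I₀])`, and both bounds follow from `∑ x ≤ 1`.
-/

/-- The indicators of the blocks of a partition add up to `1`, with block `0` split off. -/
theorem indicator_zero_add_sum_succ {k N : ℕ} (I : Fin (k + 1) → Finset (Fin N))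
    (hpart : ∀ j : Fin N, ∃! m : Fin (k + 1), j ∈ I m) (i : Fin N) :
    (if i ∈ I 0 then (1 : ℚ) else 0) + ∑ m : Fin k, (if i ∈ I m.succ then (1 : ℚ) else 0) = 1 := by
  rw [← Fin.sum_univ_succ (fun m : Fin (k + 1) => if i ∈ I m then (1 : ℚ) else 0)]
  obtain ⟨m, hm, huniq⟩ := hpart i
  rw [Finset.sum_eq_single m (fun b _ hb => if_neg fun h => hb (huniq b h)) (by simp), if_pos hm]


/-- The degree-of-divergence inequalities (6.18)–(6.19) of the paper: with the setup of
Lemma 6.3 (Cayley-type configuration `A`, partition `I₀,…,I_k`, simplex `σ` with `A_σ`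
invertible over `ℚ`), if `j ∉ σ` and the sum of all entries of `A_σ⁻¹·a(j)` is at most `1`,
then the partial sum of the entries over `σ ∩ I₀` is at most `0` when `j` lies in some `I_l`
with `l ≥ 1`, and at most `1` when `j ∈ I₀`. -/
theorem cayley_degree_of_divergence (k n N : ℕ) (hk : 0 < k) (hn : 0 < n) (hN : 0 < N)
    (I : Fin (k + 1) → Finset (Fin N))
    (hpart : ∀ j : Fin N, ∃! m : Fin (k + 1), j ∈ I m)
    (A : Matrix (Fin k ⊕ Fin n) (Fin N) ℤ)
    (hA : ∀ (m : Fin k) (j : Fin N), A (Sum.inl m) j = if j ∈ I m.succ then 1 else 0)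
    (σ : Finset (Fin N)) (hσ : σ.card = n + k)
    (B : Matrix {x // x ∈ σ} (Fin k ⊕ Fin n) ℚ)
    (hB1 : (Matrix.of fun (i : Fin k ⊕ Fin n) (j : {x // x ∈ σ}) => ((A i j : ℤ) : ℚ)) * B = 1)
    (hB2 : B * (Matrix.of fun (i : Fin k ⊕ Fin n) (j : {x // x ∈ σ}) => ((A i j : ℤ) : ℚ)) = 1)
    (j : Fin N) (hj : j ∉ σ)
    (hdeg : (∑ i : {x // x ∈ σ}, (B.mulVec fun r => ((A r j : ℤ) : ℚ)) i) ≤ 1) :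
    (∀ l : Fin k, j ∈ I l.succ →
      (∑ i : {x // x ∈ σ},
          if (i : Fin N) ∈ I 0 then (B.mulVec fun r => ((A r j : ℤ) : ℚ)) i else 0) ≤ 0) ∧
    (j ∈ I 0 →
      (∑ i : {x // x ∈ σ},
          if (i : Fin N) ∈ I 0 then (B.mulVec fun r => ((A r j : ℤ) : ℚ)) i else 0) ≤ 1) := by
  set x := B.mulVec fun r => ((A r j : ℤ) : ℚ) with hx
  have hAx : (Matrix.of fun (i : Fin k ⊕ Fin n) (j : {x // x ∈ σ}) => ((A i j : ℤ) : ℚ)).mulVec x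
      = fun r => ((A r j : ℤ) : ℚ) := by
    rw [hx, Matrix.mulVec_mulVec, hB1, Matrix.one_mulVec]
  have hrow : ∀ m : Fin k, (∑ i : {x // x ∈ σ}, (if (i : Fin N) ∈ I m.succ then (1 : ℚ) else 0) * x i)
      = if j ∈ I m.succ then 1 else 0 := by
    intro m
    have h := congrFun hAx (Sum.inl m)
    simpa [Matrix.mulVec, dotProduct, hA] using h
  have hsum : ∑ i, x i = (∑ i : {x // x ∈ σ}, if (i : Fin N) ∈ I 0 then x i else 0)
      + ∑ m : Fin k, (if j ∈ I m.succ then (1 : ℚ) else 0) := by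
    simp_rw [← hrow]
    rw [Finset.sum_comm, ← Finset.sum_add_distrib]
    refine Finset.sum_congr rfl fun i _ => ?_
    rw [← Finset.sum_mul]
    have h := congrArg (· * x i) (indicator_zero_add_sum_succ I hpart i)
    simp only [add_mul, ite_mul, one_mul, zero_mul] at h
    exact h.symm
  have hj1 := indicator_zero_add_sum_succ I hpart j
  refine ⟨fun l hl => ?_, fun h0 => ?_⟩
  · have h0 : j ∉ I 0 := fun h0 => Fin.succ_ne_zero l ((hpart j).unique hl h0)
    rw [if_neg h0] at hj1
    linarith
  · rw [if_pos h0] at hj1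
    linarith
end

section
/- Let n, N be positive integers, let z₁,…,z_N be nonzero complex numbers, let a(1),…,a(N) ∈ ℤⁿ, and let φ : (ℂ∖{0})ⁿ → ℂ be the Laurent polynomial map φ(x) = Σ_{j=1}^N z_j · x^{a(j)}, where x^{a} = Π_{i=1}^n x_i^{a_i} for a ∈ ℤⁿ. Suppose there exist a vector w ∈ ℤⁿ and an integer m ≠ 0 such that w·a(j) = m for every j = 1,…,N. Then the restriction of φ to φ⁻¹(ℂ∖{0}) is a locally trivial fibration over ℂ∖{0}: for every t ∈ ℂ∖{0} there exist an open neighborhood U of t in ℂ∖{0} and a homeomorphism Ψ : φ⁻¹(U) → U × φ⁻¹({t}) such that the first-coordinate projection of Ψ(x) equals φ(x) for all x ∈ φ⁻¹(U). -/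
/-!
The condition `w · a(j) = m` says that the Laurent polynomial map `φ` is quasi-homogeneous: for the
action of `ℂ` on the torus given by `c • x = (exp (w₁ c) x₁, …, exp (wₙ c) xₙ)`, one has
`φ (c • x) = exp (m c) φ x` (`laurentMap_expAct`). Near `t ≠ 0` choose the continuous branch
`c(s) = log (s / t) / m`, defined where `s / t` avoids the closed negative real axis, so that
`exp (m c(s)) = s / t`. Then `x ↦ (φ x, -c(φ x) • x)` trivializes `φ` over this neighbourhood, with
inverse `(s, y) ↦ c(s) • y`. As the action gives the trivialization explicitly, no isotopy theorem
is needed.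
-/

/-- The Laurent polynomial map `φ(x) = Σⱼ zⱼ x^{a(j)}` on the complex torus
`{x : Fin n → ℂ | ∀ i, x i ≠ 0}`. -/
noncomputable def laurentMap (n N : ℕ) (z : Fin N → ℂ) (a : Fin N → Fin n → ℤ)
    (x : {x : Fin n → ℂ // ∀ i, x i ≠ 0}) : ℂ :=
  ∑ j : Fin N, z j * ∏ i : Fin n, (x.1 i) ^ (a j i)

/-- The action of `c : ℂ` on the torus with weights `w`, multiplying the `i`-th coordinate by
`exp (wᵢ c)`; it is the weighted action of `exp c ∈ ℂ ∖ {0}`. Parametrizing by `c` makes it an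
action of an additive group. -/
noncomputable def expAct {n : ℕ} (w : Fin n → ℤ) (c : ℂ) (x : {x : Fin n → ℂ // ∀ i, x i ≠ 0}) :
    {x : Fin n → ℂ // ∀ i, x i ≠ 0} :=
  ⟨fun i => Complex.exp (w i * c) * x.1 i, fun i => mul_ne_zero (Complex.exp_ne_zero _) (x.2 i)⟩

theorem expAct_neg_expAct {n : ℕ} (w : Fin n → ℤ) (c : ℂ)
    (x : {x : Fin n → ℂ // ∀ i, x i ≠ 0}) : expAct w (-c) (expAct w c x) = x := by
  ext i
  simp [expAct, ← mul_assoc, ← Complex.exp_add]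

theorem expAct_expAct_neg {n : ℕ} (w : Fin n → ℤ) (c : ℂ)
    (x : {x : Fin n → ℂ // ∀ i, x i ≠ 0}) : expAct w c (expAct w (-c) x) = x := by
  simpa using expAct_neg_expAct w (-c) x

theorem continuous_expAct {n : ℕ} (w : Fin n → ℤ) :
    Continuous fun p : ℂ × {x : Fin n → ℂ // ∀ i, x i ≠ 0} => expAct w p.1 p.2 := by
  refine Continuous.subtype_mk (continuous_pi fun i => ?_) _
  have h : Continuous fun p : ℂ × {x : Fin n → ℂ // ∀ i, x i ≠ 0} => p.2.1 i :=
    (continuous_apply i).comp (continuous_subtype_val.comp continuous_snd)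
  fun_prop

theorem continuous_laurentMap (n N : ℕ) (z : Fin N → ℂ) (a : Fin N → Fin n → ℤ) :
    Continuous (laurentMap n N z a) := by
  refine continuous_finsetSum _ fun j _ => continuous_const.mul
    (continuous_finsetProd _ fun i _ => ?_)
  exact Continuous.zpow₀ ((continuous_apply i).comp continuous_subtype_val) _ fun x => Or.inl (x.2 i)

/-- Quasi-homogeneity of the Laurent polynomial map. -/
theorem laurentMap_expAct {n N : ℕ} (z : Fin N → ℂ) (a : Fin N → Fin n → ℤ) (w : Fin n → ℤ)
    (m : ℤ) (hw : ∀ j : Fin N, ∑ i : Fin n, w i * a j i = m) (c : ℂ)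
    (x : {x : Fin n → ℂ // ∀ i, x i ≠ 0}) :
    laurentMap n N z a (expAct w c x) = Complex.exp (m * c) * laurentMap n N z a x := by
  simp only [laurentMap, expAct, Finset.mul_sum]
  refine Finset.sum_congr rfl fun j _ => ?_
  have h : ∏ i, Complex.exp (w i * c) ^ a j i = Complex.exp (m * c) := by
    simp_rw [← Complex.exp_int_mul]
    rw [← Complex.exp_sum, ← hw j]
    push_cast
    rw [Finset.sum_mul]
    congr 1
    exact Finset.sum_congr rfl fun i _ => by ring
  simp_rw [mul_zpow]
  rw [Finset.prod_mul_distrib, h]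
  ring


/-- Lemma 6.4 of the paper: if all exponent vectors `a(j)` lie on a common affine hyperplane
`w · a = m` with `m ≠ 0`, then the Laurent polynomial map `φ` restricted to `φ⁻¹(ℂ∖{0})`
is a locally trivial fibration over `ℂ∖{0}`. -/
theorem laurentMap_locally_trivial_fibration (n N : ℕ) (hn : 0 < n) (hN : 0 < N)
    (z : Fin N → ℂ) (hz : ∀ j, z j ≠ 0) (a : Fin N → Fin n → ℤ)
    (w : Fin n → ℤ) (m : ℤ) (hm : m ≠ 0)
    (hw : ∀ j : Fin N, ∑ i : Fin n, w i * a j i = m) :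
    ∀ t : ℂ, t ≠ 0 →
      ∃ U : Set ℂ, IsOpen U ∧ t ∈ U ∧ (0 : ℂ) ∉ U ∧
        ∃ Ψ : {x : {x : Fin n → ℂ // ∀ i, x i ≠ 0} // laurentMap n N z a x ∈ U} ≃ₜ
              U × {x : {x : Fin n → ℂ // ∀ i, x i ≠ 0} // laurentMap n N z a x = t},
          ∀ x, ((Ψ x).1 : ℂ) = laurentMap n N z a x.1 := by
  intro t ht
  have hm' : (m : ℂ) ≠ 0 := by exact_mod_cast hm
  set U : Set ℂ := {s | s / t ∈ Complex.slitPlane} with hU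
  set c : ℂ → ℂ := fun s => Complex.log (s / t) / m with hc
  have hU0 : ∀ s ∈ U, s ≠ 0 := by
    rintro s hs rfl
    simp [hU] at hs
  have hexp : ∀ s ∈ U, Complex.exp (m * c s) = s / t := fun s hs => by
    rw [hc, mul_div_cancel₀ _ hm', Complex.exp_log (div_ne_zero (hU0 s hs) ht)]
  have hcU : Continuous fun s : U => c s :=
    (Continuous.clog (by fun_prop) fun s => s.2).div_const _
  have hφ := continuous_laurentMap n N z a
  -- `c(s)` moves the fibre over `t` to the fibre over `s`, and `-c(s)` moves it back.
  have hto : ∀ x, laurentMap n N z a x ∈ U →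
      laurentMap n N z a (expAct w (-c (laurentMap n N z a x)) x) = t := fun x hx => by
    rw [laurentMap_expAct z a w m hw, mul_neg, Complex.exp_neg, hexp _ hx, inv_div,
      div_mul_cancel₀ _ (hU0 _ hx)]
  have hinv : ∀ s ∈ U, ∀ y, laurentMap n N z a y = t →
      laurentMap n N z a (expAct w (c s) y) = s := fun s hs y hy => by
    rw [laurentMap_expAct z a w m hw, hexp _ hs, hy, div_mul_cancel₀ _ ht]
  refine ⟨U, Complex.isOpen_slitPlane.preimage (by fun_prop), by simp [hU, ht],
    fun h => hU0 0 h rfl, ?_⟩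
  refine ⟨{ toFun := fun x => (⟨laurentMap n N z a x.1, x.2⟩, ⟨_, hto x.1 x.2⟩)
            invFun := fun p => ⟨expAct w (c p.1) p.2.1, by
              rw [hinv _ p.1.2 _ p.2.2]; exact p.1.2⟩
            left_inv := fun x => Subtype.ext (expAct_expAct_neg w _ _)
            right_inv := fun p => ?_
            continuous_toFun := ?_
            continuous_invFun := ?_ }, fun x => rfl⟩
  · have h := hinv _ p.1.2 _ p.2.2
    refine Prod.ext (Subtype.ext h) (Subtype.ext ?_)
    simp only [h]
    exact expAct_neg_expAct w _ _
  · have h1 : Continuous fun x : {x // laurentMap n N z a x ∈ U} =>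
        (⟨laurentMap n N z a x.1, x.2⟩ : U) :=
      (hφ.comp continuous_subtype_val).subtype_mk _
    exact h1.prodMk (((continuous_expAct w).comp
      ((hcU.comp h1).neg.prodMk continuous_subtype_val)).subtype_mk _)
  · exact ((continuous_expAct w).comp ((hcU.comp continuous_fst).prodMk
      (continuous_subtype_val.comp continuous_snd))).subtype_mk _
end

section
/- For every α ∈ ℂ and every real δ > 0: 2i·sin(πα)·∫_{δ}^{∞} t^{α−1} e^{−t} dt + i·exp(α·log δ)·∫_{−π}^{π} exp(iαθ + δe^{iθ}) dθ = 2πi / Γ(1−α). Here t^{α−1} := exp((α−1)·log t) for real t > 0, the first integral is over the real ray [δ,∞), the second integral is over θ ∈ [−π,π], Γ is the complex Gamma function, and when 1−α is a nonpositive integer the right-hand side is interpreted as 0 (consistently with the convention that 1/Γ vanishes at the poles of Γ). -/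
/-!
Write `H(α)` for the left-hand side with `δ` fixed. Integration by parts on the rays
(`ray_add_one`) and on the circle (`circ_add_one`) gives `H(α + 1) = -α H(α)`, the boundary terms
cancelling where the rays meet the circle. The function `2πi / Γ(1 - α)` obeys the same recurrence,
so induction reduces the claim to `Re α > 1` and to `α = 0`, the one value the recurrence cannot
reach. At `α = 0` the rays drop out and the mean value property of `exp` gives `2πi`.

For `Re α > 1`, expanding the exponential and integrating term by term shows that the circle
contributes `2i sin(πα) ∫_0^δ t^{α-1} e^{-t} dt` (`circ_eq_lower`). Together with the rays this is
`2i sin(πα) Γ(α)`, and Euler's reflection formula concludes. The bound `Re α > 1`, rather than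
`Re α > 0`, makes the integrand `t^{α-1}` continuous at `0`.
-/

open MeasureTheory

namespace HankelContour

open Complex Filter Topology Set

/-- The upper incomplete Gamma function `∫_δ^∞ t^{α-1} e^{-t} dt`, to which both rays of the
contour reduce. -/
noncomputable def ray (α : ℂ) (δ : ℝ) : ℂ :=
  ∫ t in Set.Ioi δ, Complex.exp ((α - 1) * (Real.log t : ℂ)) * Complex.exp (-(t : ℂ))

/-- The circle integral `∫_{-π}^{π} e^{iαθ + δe^{iθ}} dθ`, without its prefactor `i δ^α`. -/
noncomputable def circ (α : ℂ) (δ : ℝ) : ℂ :=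
  ∫ θ in (-Real.pi)..Real.pi,
    Complex.exp (Complex.I * α * (θ : ℂ) + (δ : ℂ) * Complex.exp (Complex.I * (θ : ℂ)))

lemma hasSum_integral_mul_exp (a b : ℝ) {w u : ℝ → ℂ} (hw : Continuous w) (hu : Continuous u) :
    HasSum (fun n : ℕ => ∫ x in a..b, w x * (u x ^ n / (n.factorial : ℂ)))
      (∫ x in a..b, w x * Complex.exp (u x)) := by
  obtain ⟨A, hA⟩ := (isCompact_uIcc (a := a) (b := b)).exists_bound_of_continuousOn hw.continuousOn
  obtain ⟨B, hB⟩ := (isCompact_uIcc (a := a) (b := b)).exists_bound_of_continuousOn hu.continuousOn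
  have hA0 : 0 ≤ A := (norm_nonneg _).trans (hA a left_mem_uIcc)
  have hB0 : 0 ≤ B := (norm_nonneg _).trans (hB a left_mem_uIcc)
  let f : ℕ → C(ℝ, ℂ) := fun n => ⟨fun x => w x * (u x ^ n / (n.factorial : ℂ)), by fun_prop⟩
  have key := intervalIntegral.hasSum_intervalIntegral_of_summable_norm (a := a) (b := b) (f := f) ?_
  · have he : ∀ x, w x * Complex.exp (u x) = ∑' n, f n x := fun x => by
      simp only [f, ContinuousMap.coe_mk]
      rw [tsum_mul_left, Complex.exp_eq_exp_ℂ, NormedSpace.exp_eq_tsum_div]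
    simp_rw [he]
    exact key
  · refine Summable.of_nonneg_of_le (fun n => norm_nonneg _) (fun n => ?_)
      ((Real.summable_pow_div_factorial B).mul_left A)
    refine (ContinuousMap.norm_le _ (by positivity)).2 fun x => ?_
    simp only [f, ContinuousMap.restrict_apply, ContinuousMap.coe_mk, norm_mul, norm_div, norm_pow,
      Complex.norm_natCast]
    gcongr
    · exact hA _ x.2
    · exact hB _ x.2

lemma exp_log_eq_cpow {t : ℝ} (ht : 0 < t) (z : ℂ) :
    Complex.exp (z * (Real.log t : ℂ)) = (t : ℂ) ^ z := by
  rw [Complex.cpow_def_of_ne_zero (by exact_mod_cast ht.ne'), Complex.ofReal_log ht.le, mul_comm]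

lemma integrableOn_ray (α : ℂ) {δ : ℝ} (hδ : 0 < δ) :
    IntegrableOn
      (fun t : ℝ => Complex.exp ((α - 1) * (Real.log t : ℂ)) * Complex.exp (-(t : ℂ))) (Ioi δ) := by
  have hc : ContinuousOn (fun t : ℝ => Real.exp (-t) * t ^ (α.re - 1)) (Ici δ) := by
    refine ContinuousOn.mul (by fun_prop) ?_
    exact continuousOn_id.rpow_const fun t ht => Or.inl (hδ.trans_le ht).ne'
  have h := integrable_of_isBigO_exp_neg (by norm_num : (0 : ℝ) < 1 / 2) hc
    (Real.Gamma_integrand_isLittleO (α.re - 1)).isBigO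
  refine Integrable.mono' h ?_ ?_
  · refine ContinuousOn.aestronglyMeasurable ?_ measurableSet_Ioi
    have hl : ContinuousOn (fun t : ℝ => (Real.log t : ℂ)) (Ioi δ) :=
      continuous_ofReal.comp_continuousOn
        (Real.continuousOn_log.mono fun t ht => (hδ.trans ht).ne')
    fun_prop
  · refine (ae_restrict_iff' measurableSet_Ioi).2 (ae_of_all _ fun t ht => ?_)
    have ht0 : 0 < t := hδ.trans ht
    rw [exp_log_eq_cpow ht0, norm_mul, norm_cpow_eq_rpow_re_of_pos ht0, Complex.norm_exp, mul_comm]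
    simp

lemma ray_add_one (α : ℂ) {δ : ℝ} (hδ : 0 < δ) :
    ray (α + 1) δ = Complex.exp (α * (Real.log δ : ℂ)) * Complex.exp (-(δ : ℂ)) + α * ray α δ := by
  have h1 := integrableOn_ray (α + 1) hδ
  have h0 := integrableOn_ray α hδ
  have key := integral_Ioi_of_hasDerivAt_of_tendsto' (a := δ) (m := 0)
    (f := fun t : ℝ => -(Complex.exp (α * (Real.log t : ℂ)) * Complex.exp (-(t : ℂ))))
    (f' := fun t : ℝ =>
      Complex.exp ((α + 1 - 1) * (Real.log t : ℂ)) * Complex.exp (-(t : ℂ))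
      - α * (Complex.exp ((α - 1) * (Real.log t : ℂ)) * Complex.exp (-(t : ℂ))))
    ?_ (h1.sub (h0.const_mul α)) ?_
  · rw [integral_sub h1 (h0.const_mul α), integral_const_mul] at key
    unfold ray
    linear_combination key
  · intro t ht
    have ht0 : 0 < t := hδ.trans_le ht
    have htc : (t : ℂ) ≠ 0 := by exact_mod_cast ht0.ne'
    have d1 : HasDerivAt (fun t : ℝ => Complex.exp (α * (Real.log t : ℂ)))
        (Complex.exp (α * (Real.log t : ℂ)) * (α * ((t⁻¹ : ℝ) : ℂ))) t :=
      ((Real.hasDerivAt_log ht0.ne').ofReal_comp.const_mul α).cexp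
    have d2 : HasDerivAt (fun t : ℝ => Complex.exp (-(t : ℂ)))
        (Complex.exp (-(t : ℂ)) * (-1)) t := by
      simpa using (hasDerivAt_id t).ofReal_comp.neg.cexp
    have e : Complex.exp ((α - 1) * (Real.log t : ℂ))
        = Complex.exp (α * (Real.log t : ℂ)) * ((t⁻¹ : ℝ) : ℂ) := by
      rw [sub_mul, Complex.exp_sub, one_mul, ← Complex.ofReal_exp, Real.exp_log ht0,
        Complex.ofReal_inv, div_eq_mul_inv]
    refine (d1.mul d2).neg.congr_deriv ?_
    rw [e, add_sub_cancel_right]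
    ring
  · rw [tendsto_zero_iff_norm_tendsto_zero]
    have h := (Real.Gamma_integrand_isLittleO α.re).trans_tendsto
      (g'' := fun x : ℝ => Real.exp (-(1 / 2) * x)) ?_
    · refine h.congr' ?_
      filter_upwards [eventually_gt_atTop 0] with t ht
      rw [exp_log_eq_cpow ht, norm_neg, norm_mul, norm_cpow_eq_rpow_re_of_pos ht,
        Complex.norm_exp, mul_comm]
      simp
    · exact Real.tendsto_exp_atBot.comp (tendsto_id.const_mul_atTop_of_neg (by norm_num))

lemma exp_I_pi : Complex.exp (I * (Real.pi : ℂ)) = -1 := by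
  rw [mul_comm, Complex.exp_pi_mul_I]

lemma exp_I_neg_pi : Complex.exp (I * ((-Real.pi : ℝ) : ℂ)) = -1 := by
  rw [ofReal_neg, mul_neg, Complex.exp_neg, exp_I_pi]; norm_num

lemma two_I_sin (z : ℂ) :
    Complex.exp (I * z) - Complex.exp (-(I * z)) = 2 * I * Complex.sin z := by
  rw [Complex.sin, mul_comm I z, neg_mul]
  linear_combination (Complex.exp (z * I) - Complex.exp (-(z * I))) * I_sq

lemma circ_add_one (α : ℂ) (δ : ℝ) :
    I * α * circ α δ + I * δ * circ (α + 1) δ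
      = 2 * I * Complex.sin ((Real.pi : ℂ) * α) * Complex.exp (-(δ : ℂ)) := by
  have c (β : ℂ) : Continuous fun θ : ℝ =>
      Complex.exp (I * β * (θ : ℂ) + (δ : ℂ) * Complex.exp (I * (θ : ℂ))) := by fun_prop
  have key := intervalIntegral.integral_eq_sub_of_hasDerivAt (a := -Real.pi) (b := Real.pi)
    (f := fun θ : ℝ => Complex.exp (I * α * (θ : ℂ) + (δ : ℂ) * Complex.exp (I * (θ : ℂ))))
    (f' := fun θ : ℝ =>
      I * α * Complex.exp (I * α * (θ : ℂ) + (δ : ℂ) * Complex.exp (I * (θ : ℂ)))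
      + I * δ * Complex.exp (I * (α + 1) * (θ : ℂ) + (δ : ℂ) * Complex.exp (I * (θ : ℂ))))
    ?_ ?_
  · rw [intervalIntegral.integral_add (((c α).const_mul _).intervalIntegrable _ _)
      (((c (α + 1)).const_mul _).intervalIntegrable _ _), intervalIntegral.integral_const_mul,
      intervalIntegral.integral_const_mul, exp_I_pi, exp_I_neg_pi] at key
    unfold circ
    rw [key, ← two_I_sin, Complex.exp_add, Complex.exp_add, ofReal_neg]
    ring_nf
  · intro θ _
    have d0 (c : ℂ) : HasDerivAt (fun θ : ℝ => c * (θ : ℂ)) c θ := by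
      simpa using (hasDerivAt_id θ).ofReal_comp.const_mul c
    refine ((d0 (I * α)).add ((d0 I).cexp.const_mul (δ : ℂ))).cexp.congr_deriv ?_
    have e : Complex.exp (I * (α + 1) * (θ : ℂ) + (δ : ℂ) * Complex.exp (I * (θ : ℂ)))
        = Complex.exp (I * α * (θ : ℂ) + (δ : ℂ) * Complex.exp (I * (θ : ℂ)))
          * Complex.exp (I * (θ : ℂ)) := by
      rw [← Complex.exp_add]; ring_nf
    rw [e]
    simp only [Pi.add_apply]
    ring
  · exact (((c α).const_mul _).add ((c (α + 1)).const_mul _)).intervalIntegrable _ _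

/-- Mean value property of the entire function `exp` on the circle of radius `δ`. -/
lemma circ_zero (δ : ℝ) : circ 0 δ = 2 * Real.pi := by
  have h : Real.circleAverage Complex.exp 0 δ = Complex.exp 0 :=
    Complex.differentiable_exp.diffContOnCl.circleAverage
  have hp : Function.Periodic (fun θ : ℝ => Complex.exp (circleMap 0 δ θ)) (2 * Real.pi) :=
    (periodic_circleMap 0 δ).comp _
  have h2 := hp.intervalIntegral_add_eq (-Real.pi) 0
  rw [Real.circleAverage_def, Complex.exp_zero, inv_smul_eq_iff₀ Real.two_pi_pos.ne'] at h
  rw [zero_add, h, show -Real.pi + 2 * Real.pi = Real.pi by ring] at h2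
  unfold circ
  rw [show (2 * Real.pi : ℂ) = (2 * Real.pi) • (1 : ℂ) by simp, ← h2]
  refine intervalIntegral.integral_congr fun θ _ => ?_
  simp [circleMap, mul_comm]

/-- Both sides have the same expansion
`∑ₙ 2 sin(πα) (-1)ⁿ δ^{α+n} / (n! (α+n))`, obtained by integrating the exponential series
term by term. -/
lemma circ_eq_lower {α : ℂ} (hα : 1 < α.re) {δ : ℝ} (hδ : 0 < δ) :
    (δ : ℂ) ^ α * circ α δ = 2 * Complex.sin ((Real.pi : ℂ) * α) *
      ∫ t in (0 : ℝ)..δ, (t : ℂ) ^ (α - 1) * Complex.exp (-(t : ℂ)) := by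
  have hδc : (δ : ℂ) ≠ 0 := by exact_mod_cast hδ.ne'
  have hne (n : ℕ) : α + n ≠ 0 := by
    intro h
    have := congrArg Complex.re h
    simp at this
    have : (0 : ℝ) ≤ n := n.cast_nonneg
    linarith
  have hcw : Continuous fun t : ℝ => (t : ℂ) ^ (α - 1) :=
    Complex.continuous_ofReal_cpow_const (by simpa using hα)
  have s1 := (hasSum_integral_mul_exp (-Real.pi) Real.pi
    (w := fun θ : ℝ => Complex.exp (I * α * θ)) (u := fun θ : ℝ => δ * Complex.exp (I * θ))
    (by fun_prop) (by fun_prop)).mul_left ((δ : ℂ) ^ α)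
  have s2 := (hasSum_integral_mul_exp 0 δ (w := fun t : ℝ => (t : ℂ) ^ (α - 1))
    (u := fun t : ℝ => -(t : ℂ)) hcw (by fun_prop)).mul_left
      (2 * Complex.sin ((Real.pi : ℂ) * α))
  simp_rw [← Complex.exp_add] at s1
  refine s1.unique ?_
  convert s2 using 2 with n
  have e1 : ∫ θ in (-Real.pi)..Real.pi, Complex.exp (I * α * θ) *
      ((δ * Complex.exp (I * θ)) ^ n / (n.factorial : ℂ))
      = δ ^ n / (n.factorial : ℂ) * (2 * (-1) ^ n * Complex.sin (Real.pi * α) / (α + n)) := by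
    have : ∀ θ : ℝ, Complex.exp (I * α * θ) * ((δ * Complex.exp (I * θ)) ^ n / (n.factorial : ℂ))
        = δ ^ n / (n.factorial : ℂ) * Complex.exp (I * (α + n) * θ) := by
      intro θ
      rw [mul_pow, ← Complex.exp_nat_mul, mul_add, add_mul, Complex.exp_add]
      ring_nf
    simp_rw [this]
    rw [intervalIntegral.integral_const_mul,
      integral_exp_mul_complex (mul_ne_zero I_ne_zero (hne n))]
    congr 1
    rw [show I * (α + n) * (Real.pi : ℂ) = I * (Real.pi * α + n * Real.pi) by ring,
      show I * (α + n) * ((-Real.pi : ℝ) : ℂ) = -(I * (Real.pi * α + n * Real.pi)) by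
        push_cast; ring, two_I_sin, Complex.sin_antiperiodic.add_nat_mul_eq]
    have := hne n
    field_simp
  have e2 : ∫ t in (0 : ℝ)..δ, (t : ℂ) ^ (α - 1) * ((-(t : ℂ)) ^ n / (n.factorial : ℂ))
      = (-1) ^ n / (n.factorial : ℂ) * ((δ : ℂ) ^ (α + n) / (α + n)) := by
    have : ∫ t in (0 : ℝ)..δ, (t : ℂ) ^ (α - 1) * ((-(t : ℂ)) ^ n / (n.factorial : ℂ))
        = ∫ t in (0 : ℝ)..δ, (-1) ^ n / (n.factorial : ℂ) * (t : ℂ) ^ (α + n - 1) := by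
      refine intervalIntegral.integral_congr_ae (ae_of_all _ fun t ht => ?_)
      rw [uIoc_of_le hδ.le] at ht
      have htc : (t : ℂ) ≠ 0 := by exact_mod_cast ht.1.ne'
      rw [show α + n - 1 = (α - 1) + n by ring, Complex.cpow_add _ _ htc, Complex.cpow_natCast,
        neg_pow]
      ring
    rw [this, intervalIntegral.integral_const_mul, integral_cpow, sub_add_cancel, ofReal_zero,
      Complex.zero_cpow (hne n), sub_zero]
    left
    have : (0 : ℝ) ≤ n := n.cast_nonneg
    simp
    linarith
  rw [e1, e2, Complex.cpow_add _ _ hδc, Complex.cpow_natCast]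
  ring

lemma lower_add_ray {α : ℂ} (hα : 0 < α.re) {δ : ℝ} (hδ : 0 < δ) :
    (∫ t in (0 : ℝ)..δ, (t : ℂ) ^ (α - 1) * Complex.exp (-(t : ℂ))) + ray α δ
      = Complex.Gamma α := by
  have hi : IntegrableOn (fun t : ℝ => (t : ℂ) ^ (α - 1) * Complex.exp (-(t : ℂ))) (Ioi 0) := by
    refine (Complex.GammaIntegral_convergent hα).congr_fun (fun t _ => ?_) measurableSet_Ioi
    simp [mul_comm]
  have hr : ray α δ = ∫ t in Ioi δ, (t : ℂ) ^ (α - 1) * Complex.exp (-(t : ℂ)) :=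
    setIntegral_congr_fun measurableSet_Ioi fun t ht => by
      simp only [exp_log_eq_cpow (hδ.trans ht)]
  rw [hr, intervalIntegral.integral_interval_add_Ioi hi (hi.mono_set (Ioi_subset_Ioi hδ.le)),
    Complex.Gamma_eq_integral hα, Complex.GammaIntegral]
  refine setIntegral_congr_fun measurableSet_Ioi fun t _ => ?_
  simp [mul_comm]

/-- The Hankel integral over the contour of radius `δ`, split into its rays and its circle. -/
noncomputable def hankel (α : ℂ) (δ : ℝ) : ℂ :=
  2 * I * Complex.sin ((Real.pi : ℂ) * α) * ray α δ
    + I * Complex.exp (α * (Real.log δ : ℂ)) * circ α δ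

lemma hankel_of_one_lt_re {α : ℂ} (hα : 1 < α.re) {δ : ℝ} (hδ : 0 < δ) :
    hankel α δ = 2 * (Real.pi : ℂ) * I * (Complex.Gamma (1 - α))⁻¹ := by
  have h1 : hankel α δ = 2 * I * Complex.sin ((Real.pi : ℂ) * α) * Complex.Gamma α := by
    rw [hankel, exp_log_eq_cpow hδ, ← lower_add_ray (by linarith) hδ]
    linear_combination I * circ_eq_lower hα hδ
  have hG : Complex.Gamma α ≠ 0 := Complex.Gamma_ne_zero_of_re_pos (by linarith)
  have hrefl := Complex.Gamma_mul_Gamma_one_sub α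
  rw [h1]
  by_cases hs : Complex.sin ((Real.pi : ℂ) * α) = 0
  · -- At a positive integer `α` both `sin (π α)` and (by convention) `Γ (1 - α)` vanish.
    rw [hs, div_zero] at hrefl
    rw [hs, (mul_eq_zero.1 hrefl).resolve_left hG]
    simp
  · have hp : (Real.pi : ℂ) ≠ 0 := by exact_mod_cast Real.pi_ne_zero
    have hG' : Complex.Gamma (1 - α) ≠ 0 := by
      intro h
      rw [h, mul_zero] at hrefl
      exact div_ne_zero hp hs hrefl.symm
    rw [eq_div_iff hs] at hrefl
    rw [eq_mul_inv_iff_mul_eq₀ hG']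
    linear_combination 2 * I * hrefl

/-- The boundary terms of the two integrations by parts cancel: the contour is closed up
to the ends at `-∞`. -/
lemma hankel_add_one (α : ℂ) {δ : ℝ} (hδ : 0 < δ) : hankel (α + 1) δ = -α * hankel α δ := by
  have hs : Complex.sin ((Real.pi : ℂ) * (α + 1)) = -Complex.sin ((Real.pi : ℂ) * α) := by
    rw [mul_add, mul_one, Complex.sin_add_pi]
  have he : Complex.exp ((α + 1) * (Real.log δ : ℂ))
      = Complex.exp (α * (Real.log δ : ℂ)) * δ := by
    rw [add_mul, one_mul, Complex.exp_add, ← Complex.ofReal_exp, Real.exp_log hδ]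
  rw [hankel, hankel, hs, he, ray_add_one α hδ]
  linear_combination Complex.exp (α * (Real.log δ : ℂ)) * circ_add_one α δ

lemma hankel_eq {δ : ℝ} (hδ : 0 < δ) (n : ℕ) :
    ∀ α : ℂ, 1 - n < α.re → hankel α δ = 2 * (Real.pi : ℂ) * I * (Complex.Gamma (1 - α))⁻¹ := by
  induction n with
  | zero => exact fun α hα => hankel_of_one_lt_re (by simpa using hα) hδ
  | succ n ih =>
    intro α hα
    rcases eq_or_ne α 0 with rfl | h0
    · -- The recurrence gives no information about `hankel 0 δ`.
      simp [hankel, circ_zero]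
      ring
    · have h := ih (α + 1) (by push_cast at hα; simp only [add_re, one_re]; linarith)
      have hG := Complex.one_div_Gamma_eq_self_mul_one_div_Gamma_add_one (-α)
      rw [hankel_add_one α hδ, show 1 - (α + 1) = -α by ring, hG,
        show -α + 1 = 1 - α by ring] at h
      refine mul_left_cancel₀ (neg_ne_zero.2 h0) ?_
      linear_combination h

end HankelContour

/-- Lemma 6.2 of the paper, the Hankel contour integral
`∫_{C₀} ξ^{α-1} e^{ξ} dξ = 2πi / Γ(1-α)`, written out explicitly: the two ray pieces of the
contour (arguments `±π`) contribute `2i sin(πα) ∫_δ^∞ t^{α-1} e^{-t} dt` and the circle of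
radius `δ` contributes `i δ^α ∫_{-π}^{π} e^{iαθ + δe^{iθ}} dθ`. When `1-α` is a nonpositive
integer, `Γ(1-α) = 0` in Mathlib and division by zero yields `0`, matching the convention
that `1/Γ` vanishes at the poles of `Γ`. -/
theorem hankel_contour_integral (α : ℂ) (δ : ℝ) (hδ : 0 < δ) :
    2 * Complex.I * Complex.sin ((Real.pi : ℂ) * α) *
        (∫ t in Set.Ioi δ, Complex.exp ((α - 1) * (Real.log t : ℂ)) * Complex.exp (-(t : ℂ)))
      + Complex.I * Complex.exp (α * (Real.log δ : ℂ)) *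
        (∫ θ in (-Real.pi)..Real.pi,
          Complex.exp (Complex.I * α * (θ : ℂ) + (δ : ℂ) * Complex.exp (Complex.I * (θ : ℂ))))
      = 2 * (Real.pi : ℂ) * Complex.I / Complex.Gamma (1 - α) := by
  have h := HankelContour.hankel_eq hδ (Nat.ceil (1 - α.re) + 1) α (by
    have := Nat.le_ceil (1 - α.re)
    push_cast
    linarith)
  rw [div_eq_mul_inv]
  exact h
end
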